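/- For every real x with 0 < x ≤ 1/2, (1 − x)·log(1 − x) − (1/2)·(1 − 2x)·log(1 − 2x) < 0, where at x = 1/2 the second term is interpreted as 0 (convention 0·log 0 = 0). -/

import Mathlib

/-!
For `0 < x ≤ 1/2`, `(1-x) log(1-x) - (1/2)(1-2x) log(1-2x) < 0`.  At `x = 1/2` the second
term is `0 · log 0`, which is `0` (automatic since `Real.log 0 = 0`).
-/

theorem entropy_difference_neg_general {c x : ℝ} (hc : 1 < c) (hx0 : x ≠ 0) (hx : c * x ≤ 1) :
    (1 - x) * Real.log (1 - x) - (1 / c) * ((1 - c * x) * Real.log (1 - c * x)) < 0 := by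
  have hc0 : 0 < c := one_pos.trans hc
  have one_ne : 1 ≠ 1 - c * x := fun h ↦ mul_ne_zero hc0.ne' hx0 (by linarith)
  have weight_pos : 0 < 1 - 1 / c := sub_pos.2 ((div_lt_one hc0).2 hc)
  have convex_comb : (1 - 1 / c) * 1 + 1 / c * (1 - c * x) = 1 - x := by
    field_simp
    ring
  have jensen := Real.strictConvexOn_mul_log.2 (Set.mem_Ici.2 zero_le_one)
    (Set.mem_Ici.2 (sub_nonneg.2 hx)) one_ne weight_pos (one_div_pos.2 hc0)
    (sub_add_cancel 1 (1 / c))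
  simp only [smul_eq_mul, convex_comb, Real.log_one, mul_zero, zero_add] at jensen
  exact sub_neg.2 jensen

theorem entropy_difference_neg (x : ℝ) (hx0 : 0 < x) (hx : x ≤ 1 / 2) :
    (1 - x) * Real.log (1 - x) - (1 / 2) * ((1 - 2 * x) * Real.log (1 - 2 * x)) < 0 :=
  entropy_difference_neg_general one_lt_two hx0.ne' (by linarith)
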